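/- Let 𝕂 be an intermediate field 𝔽_q ⊆ 𝕂 ⊆ 𝕃, and let a = a(X_1) ∈ 𝕂(r_1) and b = b(X_2) ∈ 𝕂(r_2) be such that a ∣ X_1^{r_1}−1 and b ∣ X_2^{r_2}−1. Suppose there exist (α_1,α_2) ∈ U, h_1 ∈ ℤ_{r_1} and h_2 ∈ ℤ_{r_2} for which φ^{-1}_{α_1, X_1^{h_1}a} ∈ 𝔽_q(r_1) and φ^{-1}_{α_2, X_2^{h_2}b} ∈ 𝔽_q(r_2), with at least one of these inverses different from 1. Then there exists in 𝔽_q(r_1,r_2) a family of pairwise permutation-equivalent bivariate BCH codes {C_β̄ = B_q(β̄, γ̄, δ̄, b̄) : β̄ ∈ U} such that: (1) γ̄ ⊆ {1,2}, with 1 ∉ γ̄ if supp(a) = ℤ_{r_1} and 2 ∉ γ̄ if supp(b) = ℤ_{r_2}; (2) δ̄ = {δ_k : k ∈ γ̄} with δ_1 = Δ(M(a)) and δ_2 = Δ(M(b)); (3) ∏_{k∈γ̄} δ_k = Δ(C_β̄) = d(C_β̄) for each β̄ ∈ U; (4) φ^{-1}_{β_1, X_1^{h_1}a}·φ^{-1}_{β_2,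 X_2^{h_2}b} = φ^{-1}_{β̄, (X_1^{h_1}a)(X_2^{h_2}b)} ∈ C_β̄, where β̄ = (β_1,β_2). Here Δ denotes the apparent distance with respect to the BCH ds-bound. -/

import Mathlib

/-!
Let `A`, `B` be the shifts of `a`, `b` by `h₁`, `h₂`, and `δ₁ = Δ(a)`, `δ₂ = Δ(b)`. The set `D` is
generated under multiplication by `q` by all rows (columns) whose index lies in a maximal run of
`δ₁ - 1` zeros of `A` (of `δ₂ - 1` zeros of `B`), and `C_β̄` consists of all `F`-matrices whose
Fourier transform at `β̄` vanishes on `D`. A coordinate belongs to `γ` exactly when its run is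
nonempty; otherwise `δₖ = 1`, so the product over `γ` is always `δ₁ δ₂`.

*Defining set.* A matrix `g` over `L` has an `F`-valued inverse transform as soon as
`g (q j) = g j ^ q` (`rational_of_equivariant`), a condition that does not mention `β̄`. Applied to
the indicator of the complement of `D`, this shows that `D` is the whole defining set of `C_β̄`.
Conversely, the rationality hypothesis at `(α₁, α₂)` makes `A` and `B` equivariant
(`equivariant_of_rational`), so the inverse transform of `A ⊗ B` is an `F`-codeword for every `β̄`.

*Equivalence.* Primitive roots are powers of each other, and passing from `β` to `β ^ s` permutes
the positions by multiplication by `s`.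

*Distances.* The transform of a nonzero codeword has `δ₁ - 1` consecutive zero rows and `δ₂ - 1`
consecutive zero columns, hence apparent distance at least `δ₁ δ₂` (`mul_le_bchDelta`). The apparent
distance of a transform never exceeds the weight of the word (`bchDelta_le_wt`), by applying the
BCH bound (`bch_bound`) in each variable. Finally the product word has weight at most `δ₁ δ₂`: since
`a` divides `X ^ r₁ - 1`, the inverse transform of `A` has at most `r₁ - deg a` nonzero entries, while
`a` has `r₁ - 1 - deg a` consecutive zero coefficients (`wt_inv_le`). All inequalities are therefore
equalities.
-/

open scoped Classical
open Polynomial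

noncomputable section

namespace DS

/-- Hamming weight of a vector. -/
def wt {ι R : Type} [Fintype ι] [Zero R] (v : ι → R) : ℕ :=
  (Finset.univ.filter fun i => v i ≠ 0).card

/-- Minimum (Hamming) distance of a set of codewords. -/
def minDist {ι R : Type} [Fintype ι] [Zero R] (C : Set (ι → R)) : ℕ :=
  sInf (wt '' (C \ {0}))

/-! ### Univariate (cyclic) setting -/

/-- cyclic shift = multiplication by `X` in `F[X]/(X^n-1)` -/
def shiftOne {n : ℕ} {R : Type} (v : ZMod n → R) : ZMod n → R := fun i => v (i - 1)

/-- A cyclic code: an ideal of `F[X]/(X^n-1)`, viewed through coefficient vectors. -/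
def IsCyclicCode {F : Type} [Field F] {n : ℕ} (C : Set (ZMod n → F)) : Prop :=
  (0 : ZMod n → F) ∈ C ∧ (∀ u ∈ C, ∀ v ∈ C, u + v ∈ C) ∧
    (∀ (a : F), ∀ v ∈ C, a • v ∈ C) ∧ (∀ v ∈ C, shiftOne v ∈ C)

/-- Evaluation of a (coefficient vector of a) polynomial of `L(n)` at `β`. -/
def evalV {n : ℕ} [NeZero n] {R : Type} [CommRing R] (v : ZMod n → R) (β : R) : R :=
  ∑ i : ZMod n, v i * β ^ i.val

/-- Evaluation of an `F`-polynomial at a point of an extension `L`. -/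
def evalVF {F L : Type} [Field F] [CommRing L] [Algebra F L] {n : ℕ} [NeZero n]
    (v : ZMod n → F) (β : L) : L :=
  ∑ i : ZMod n, algebraMap F L (v i) * β ^ i.val

/-- Defining set of a cyclic code with respect to `α`. -/
def defSet1 {F L : Type} [Field F] [CommRing L] [Algebra F L] {n : ℕ} [NeZero n]
    (α : L) (C : Set (ZMod n → F)) : Set (ZMod n) :=
  {i | ∀ v ∈ C, evalVF v (α ^ i.val) = 0}

/-- Discrete Fourier transform of an `F`-codeword with respect to `α`. -/
def dft1 {F L : Type} [Field F] [CommRing L] [Algebra F L] {n : ℕ} [NeZero n]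
    (α : L) (c : ZMod n → F) : ZMod n → L :=
  fun j => evalVF c (α ^ j.val)

/-- Inverse discrete Fourier transform. -/
def invDFT1 {L : Type} [Field L] {n : ℕ} [NeZero n] (α : L) (g : ZMod n → L) :
    ZMod n → L :=
  fun j => (n : L)⁻¹ * evalV g (α⁻¹ ^ j.val)

/-- The set `Z̄(v)` of `n`-th roots of unity at which `v` does not vanish. -/
def nonzeros1 {L : Type} [CommRing L] {n : ℕ} [NeZero n] (v : ZMod n → L) : Set L :=
  {β | β ^ n = 1 ∧ evalV v β ≠ 0}

/-- Multiplication (cyclic convolution) in `R[X]/(X^n-1)`. -/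
def conv1 {n : ℕ} [NeZero n] {R : Type} [CommRing R] (u v : ZMod n → R) : ZMod n → R :=
  fun i => ∑ j : ZMod n, u j * v (i - j)

/-- Coefficient vector of the reduction of `X^h·v` modulo `X^n-1`. -/
def shiftBy {n : ℕ} {R : Type} (h : ℕ) (v : ZMod n → R) : ZMod n → R :=
  fun i => v (i - (h : ZMod n))

/-- The polynomial (of degree `< n`) with coefficient vector `v`. -/
def toPoly {L : Type} [CommRing L] {n : ℕ} [NeZero n] (v : ZMod n → L) : Polynomial L :=
  ∑ i : ZMod n, Polynomial.C (v i) * Polynomial.X ^ i.val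

/-! ### ds-bounds -/

/-- A defining-set bound (ds-bound) for the minimum distance of cyclic codes over `F`. -/
structure DSBound (F : Type) [Field F] [Fintype F] where
  rel : ∀ n : ℕ, Set (ZMod n) → ℕ → Prop
  bound : ∀ (n : ℕ) [NeZero n] (C : Set (ZMod n → F)), IsCyclicCode C → C ≠ {0} →
    ∀ α : AlgebraicClosure F, IsPrimitiveRoot α n →
      ∀ (N : Set (ZMod n)) (b : ℕ), N ⊆ defSet1 α C → rel n N b → 1 ≤ b ∧ b ≤ minDist C
  mono : ∀ (n : ℕ) (N M : Set (ZMod n)), N ⊆ M → ∀ b, rel n N b → rel n M b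
  one' : ∀ (n : ℕ) (N : Set (ZMod n)), rel n N 1
  bdd : ∀ (n : ℕ) (N : Set (ZMod n)), BddAbove {b | rel n N b}

/-- The optimal ds-bound `δ̄` associated to a ds-bound `δ`. -/
def optB {F : Type} [Field F] [Fintype F] (δ : DSBound F) (n : ℕ) (N : Set (ZMod n)) : ℕ :=
  sSup {b | δ.rel n N b}

/-- Apparent distance of a vector with respect to a set `B` of ds-bounds. -/
def DeltaV {F : Type} [Field F] [Fintype F] (B : Set (DSBound F)) {L : Type} [Zero L]
    {n : ℕ} (v : ZMod n → L) : ℕ :=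
  if v = 0 then 0 else sSup ((fun δ => optB δ n {i | v i ≠ 0}ᶜ) '' B)

/-- `(B,α)`-apparent distance of a cyclic code. -/
def DeltaCodeAt1 {F : Type} [Field F] [Fintype F] {L : Type} [Field L] [Algebra F L]
    {n : ℕ} [NeZero n] (B : Set (DSBound F)) (α : L) (C : Set (ZMod n → F)) : ℕ :=
  sInf {m | ∃ c ∈ C, c ≠ 0 ∧ m = DeltaV B (dft1 α c)}

/-! ### Hypermatrices (several variables) -/

/-- Hypercolumn `H_M(j,k)` of a hypermatrix. -/
def hyperCol {L : Type} {s : ℕ} {r : Fin (s + 1) → ℕ} (M : (∀ i, ZMod (r i)) → L)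
    (j : Fin (s + 1)) (k : ZMod (r j)) : (∀ i : Fin s, ZMod (r (j.succAbove i))) → L :=
  fun x => M (j.insertNth k x)

/-- The `B`-apparent distance of an `s`-dimensional hypermatrix. -/
def DeltaH {F : Type} [Field F] [Fintype F] {L : Type} [Zero L] (B : Set (DSBound F)) :
    (s : ℕ) → (r : Fin s → ℕ) → ((∀ i, ZMod (r i)) → L) → ℕ
  | 0, _, M => if M = 0 then 0 else 1
  | s + 1, r, M =>
    if M = 0 then 0
    else
      sSup (Set.range fun j : Fin (s + 1) =>
        sSup ((fun δ => optB δ (r j) {k : ZMod (r j) | hyperCol M j k ≠ 0}ᶜ) '' B) *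
        sSup ((fun k : ZMod (r j) =>
            DeltaH B s (fun i => r (j.succAbove i)) (hyperCol M j k)) ''
          {k : ZMod (r j) | hyperCol M j k ≠ 0}))

/-- `supp_j(M)`. -/
def suppj {L : Type} [Zero L] {s : ℕ} {r : Fin (s + 1) → ℕ}
    (M : (∀ i, ZMod (r i)) → L) (j : Fin (s + 1)) : Set (ZMod (r j)) :=
  {k | hyperCol M j k ≠ 0}

/-- `ω_j(M)`. -/
def omegaj {F : Type} [Field F] [Fintype F] {L : Type} [Zero L] {s : ℕ}
    {r : Fin (s + 1) → ℕ} (B : Set (DSBound F)) (M : (∀ i, ZMod (r i)) → L)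
    (j : Fin (s + 1)) : ℕ :=
  sSup ((fun δ => optB δ (r j) (suppj M j)ᶜ) '' B)

/-- `ε_j(M)`. -/
def epsj {F : Type} [Field F] [Fintype F] {L : Type} [Zero L] {s : ℕ}
    {r : Fin (s + 1) → ℕ} (B : Set (DSBound F)) (M : (∀ i, ZMod (r i)) → L)
    (j : Fin (s + 1)) : ℕ :=
  sSup ((fun k => DeltaH B s (fun i => r (j.succAbove i)) (hyperCol M j k)) '' suppj M j)

/-- `Δ_j(M) = ω_j(M)·ε_j(M)`. -/
def Deltaj {F : Type} [Field F] [Fintype F] {L : Type} [Zero L] {s : ℕ}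
    {r : Fin (s + 1) → ℕ} (B : Set (DSBound F)) (M : (∀ i, ZMod (r i)) → L)
    (j : Fin (s + 1)) : ℕ :=
  omegaj B M j * epsj B M j

/-! ### Multivariate polynomials, DFT, abelian codes -/

/-- Evaluation of a multivariate polynomial (given by its coefficient hypermatrix). -/
def mEval {L : Type} [CommRing L] {s : ℕ} {r : Fin s → ℕ} [∀ i, NeZero (r i)]
    (f : (∀ i, ZMod (r i)) → L) (β : Fin s → L) : L :=
  ∑ j : ∀ i, ZMod (r i), f j * ∏ i, β i ^ (j i).val

/-- Multivariate discrete Fourier transform of an `F`-codeword. -/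
def mDFT {F L : Type} [Field F] [CommRing L] [Algebra F L] {s : ℕ} {r : Fin s → ℕ}
    [∀ i, NeZero (r i)] (α : Fin s → L) (c : (∀ i, ZMod (r i)) → F) :
    (∀ i, ZMod (r i)) → L :=
  fun j => ∑ k : ∀ i, ZMod (r i), algebraMap F L (c k) * ∏ i, (α i ^ (j i).val) ^ (k i).val

/-- Multivariate inverse discrete Fourier transform. -/
def mInvDFT {L : Type} [Field L] {s : ℕ} {r : Fin s → ℕ} [∀ i, NeZero (r i)]
    (α : Fin s → L) (g : (∀ i, ZMod (r i)) → L) : (∀ i, ZMod (r i)) → L :=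
  fun j => (∏ i, (r i : L))⁻¹ *
    ∑ k : ∀ i, ZMod (r i), g k * ∏ i, ((α i)⁻¹ ^ (j i).val) ^ (k i).val

/-- `Z̄(f)`: the points of `R` (products of roots of unity) where `f` does not vanish. -/
def mNonzeros {L : Type} [CommRing L] {s : ℕ} {r : Fin s → ℕ} [∀ i, NeZero (r i)]
    (f : (∀ i, ZMod (r i)) → L) : Set (Fin s → L) :=
  {β | (∀ i, β i ^ r i = 1) ∧ mEval f β ≠ 0}

/-- Multiplication by `X_t` in `F(r_1,…,r_s)`. -/
def mShift {s : ℕ} {r : Fin s → ℕ} {R : Type} (t : Fin s) (v : (∀ i, ZMod (r i)) → R) :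
    (∀ i, ZMod (r i)) → R :=
  fun j => v (fun i => if i = t then j i - 1 else j i)

/-- An abelian code: an ideal of `F[X_1,…,X_s]/(X_i^{r_i}-1)`. -/
def IsAbelianCode {F : Type} [Field F] {s : ℕ} {r : Fin s → ℕ}
    (C : Set ((∀ i, ZMod (r i)) → F)) : Prop :=
  (0 : (∀ i, ZMod (r i)) → F) ∈ C ∧ (∀ u ∈ C, ∀ v ∈ C, u + v ∈ C) ∧
    (∀ (a : F), ∀ v ∈ C, a • v ∈ C) ∧ (∀ t : Fin s, ∀ v ∈ C, mShift t v ∈ C)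

/-- Multiplication (multivariate cyclic convolution) in `R(r_1,…,r_s)`. -/
def mConv {s : ℕ} {r : Fin s → ℕ} [∀ i, NeZero (r i)] {R : Type} [CommRing R]
    (u v : (∀ i, ZMod (r i)) → R) : (∀ i, ZMod (r i)) → R :=
  fun j => ∑ k : ∀ i, ZMod (r i), u k * v (fun i => j i - k i)

/-- `(B,ᾱ)`-apparent distance of an abelian code. -/
def DeltaCodeAt {F : Type} [Field F] [Fintype F] {L : Type} [Field L] [Algebra F L]
    {s : ℕ} {r : Fin s → ℕ} [∀ i, NeZero (r i)] (B : Set (DSBound F)) (α : Fin s → L)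
    (C : Set ((∀ i, ZMod (r i)) → F)) : ℕ :=
  sInf {m | ∃ c ∈ C, c ≠ 0 ∧ m = DeltaH B s r (mDFT α c)}

/-- `B`-apparent distance of an abelian code. -/
def DeltaCode {F : Type} [Field F] [Fintype F] (L : Type) [Field L] [Algebra F L]
    {s : ℕ} {r : Fin s → ℕ} [∀ i, NeZero (r i)] (B : Set (DSBound F))
    (C : Set ((∀ i, ZMod (r i)) → F)) : ℕ :=
  sSup {m | ∃ α : Fin s → L, (∀ i, IsPrimitiveRoot (α i) (r i)) ∧ m = DeltaCodeAt B α C}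

/-! ### q-orbits, afforded hypermatrices, B-mad -/

/-- The `q`-orbit of a tuple of indices. -/
def qOrbit (q : ℕ) {s : ℕ} {r : Fin s → ℕ} (a : ∀ i, ZMod (r i)) :
    Set (∀ i, ZMod (r i)) :=
  {x | ∃ t : ℕ, x = fun i => (q : ZMod (r i)) ^ t * a i}

/-- `D` is a union of `q`-orbits. -/
def IsUnionOfQOrbits (q : ℕ) {s : ℕ} {r : Fin s → ℕ} (D : Set (∀ i, ZMod (r i))) : Prop :=
  ∀ a ∈ D, qOrbit q a ⊆ D

/-- The hypermatrix afforded by `D` (entry `0` on `D`, entry `1` outside `D`). -/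
def afforded {L : Type} [Zero L] [One L] {s : ℕ} {r : Fin s → ℕ}
    (D : Set (∀ i, ZMod (r i))) : (∀ i, ZMod (r i)) → L :=
  fun p => if p ∈ D then 0 else 1

/-- The minimum `B`-apparent distance `B-mad(M)` of a hypermatrix. -/
def Bmad {F : Type} [Field F] [Fintype F] {L : Type} [Zero L] {s : ℕ} {r : Fin s → ℕ}
    (B : Set (DSBound F)) (q : ℕ) (M : (∀ i, ZMod (r i)) → L) : ℕ :=
  sInf {m | ∃ P : (∀ i, ZMod (r i)) → L, P ≠ 0 ∧ IsUnionOfQOrbits q {p | P p ≠ 0} ∧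
    {p | P p ≠ 0} ⊆ {p | M p ≠ 0} ∧ m = DeltaH B s r P}

end DS
/-! ### Two-variable setting -/

namespace DS2
open DS

variable {r₁ r₂ : ℕ}

/-- Row `H_M(1,k)` of a matrix, i.e. the coefficient vector of `g_{1,k}`. -/
def row {L : Type} (M : ZMod r₁ × ZMod r₂ → L) (k : ZMod r₁) : ZMod r₂ → L :=
  fun j => M (k, j)

/-- Column `H_M(2,k)` of a matrix, i.e. the coefficient vector of `g_{2,k}`. -/
def col {L : Type} (M : ZMod r₁ × ZMod r₂ → L) (k : ZMod r₂) : ZMod r₁ → L :=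
  fun i => M (i, k)

/-- Row support `supp_1(M)`. -/
def supp1 {L : Type} [Zero L] (M : ZMod r₁ × ZMod r₂ → L) : Set (ZMod r₁) :=
  {k | row M k ≠ 0}

/-- Column support `supp_2(M)`. -/
def supp2 {L : Type} [Zero L] (M : ZMod r₁ × ZMod r₂ → L) : Set (ZMod r₂) :=
  {k | col M k ≠ 0}

variable {F : Type} [Field F] [Fintype F]

def omega1 {L : Type} [Zero L] (B : Set (DSBound F)) (M : ZMod r₁ × ZMod r₂ → L) : ℕ :=
  sSup ((fun δ => optB δ r₁ (supp1 M)ᶜ) '' B)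

def omega2 {L : Type} [Zero L] (B : Set (DSBound F)) (M : ZMod r₁ × ZMod r₂ → L) : ℕ :=
  sSup ((fun δ => optB δ r₂ (supp2 M)ᶜ) '' B)

def eps1 {L : Type} [Zero L] (B : Set (DSBound F)) (M : ZMod r₁ × ZMod r₂ → L) : ℕ :=
  sSup ((fun k => DeltaV B (row M k)) '' supp1 M)

def eps2 {L : Type} [Zero L] (B : Set (DSBound F)) (M : ZMod r₁ × ZMod r₂ → L) : ℕ :=
  sSup ((fun k => DeltaV B (col M k)) '' supp2 M)

/-- `B`-apparent distance of a two-variable matrix. -/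
def Delta2 {L : Type} [Zero L] (B : Set (DSBound F)) (M : ZMod r₁ × ZMod r₂ → L) : ℕ :=
  if M = 0 then 0 else max (omega1 B M * eps1 B M) (omega2 B M * eps2 B M)

/-! ### the BCH ds-bound, concretely -/

/-- `N` contains `a-1` consecutive integers modulo `n`. -/
def HasConsecutive {n : ℕ} (N : Set (ZMod n)) (a : ℕ) : Prop :=
  ∃ i0 : ZMod n, ∀ t : ℕ, t < a - 1 → i0 + (t : ZMod n) ∈ N

/-- The BCH ds-bound relation `(N,a) ∈ (δ_BCH)_n`. -/
def bchRel {n : ℕ} (N : Set (ZMod n)) (a : ℕ) : Prop :=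
  a = 1 ∨ (2 ≤ a ∧ HasConsecutive N a)

/-- The optimal BCH ds-bound `δ̄_BCH`. -/
def bchOpt (n : ℕ) (N : Set (ZMod n)) : ℕ := sSup {a | bchRel N a}

/-- BCH apparent distance of a vector. -/
def bchV {L : Type} [Zero L] {n : ℕ} (v : ZMod n → L) : ℕ :=
  if v = 0 then 0 else bchOpt n {i | v i ≠ 0}ᶜ

def bchOmega1 {L : Type} [Zero L] (M : ZMod r₁ × ZMod r₂ → L) : ℕ :=
  bchOpt r₁ (supp1 M)ᶜ

def bchOmega2 {L : Type} [Zero L] (M : ZMod r₁ × ZMod r₂ → L) : ℕ :=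
  bchOpt r₂ (supp2 M)ᶜ

def bchEps1 {L : Type} [Zero L] (M : ZMod r₁ × ZMod r₂ → L) : ℕ :=
  sSup ((fun k => bchV (row M k)) '' supp1 M)

def bchEps2 {L : Type} [Zero L] (M : ZMod r₁ × ZMod r₂ → L) : ℕ :=
  sSup ((fun k => bchV (col M k)) '' supp2 M)

/-- `Δ_1(M)` for the BCH bound. -/
def bchD1 {L : Type} [Zero L] (M : ZMod r₁ × ZMod r₂ → L) : ℕ := bchOmega1 M * bchEps1 M

/-- `Δ_2(M)` for the BCH bound. -/
def bchD2 {L : Type} [Zero L] (M : ZMod r₁ × ZMod r₂ → L) : ℕ := bchOmega2 M * bchEps2 M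

/-- BCH apparent distance of a two-variable matrix. -/
def bchDelta {L : Type} [Zero L] (M : ZMod r₁ × ZMod r₂ → L) : ℕ :=
  if M = 0 then 0 else max (bchD1 M) (bchD2 M)

/-! ### bivariate polynomials, DFT, codes -/

/-- Evaluation of a bivariate polynomial at `(u,v)`. -/
def eval2 {L : Type} [CommRing L] [NeZero r₁] [NeZero r₂] (g : ZMod r₁ × ZMod r₂ → L)
    (u v : L) : L :=
  ∑ p : ZMod r₁ × ZMod r₂, g p * u ^ p.1.val * v ^ p.2.val

/-- Bivariate DFT of an `F`-codeword. -/
def dft2 {F L : Type} [Field F] [CommRing L] [Algebra F L] [NeZero r₁] [NeZero r₂]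
    (α₁ α₂ : L) (c : ZMod r₁ × ZMod r₂ → F) : ZMod r₁ × ZMod r₂ → L :=
  fun j => ∑ p : ZMod r₁ × ZMod r₂,
    algebraMap F L (c p) * (α₁ ^ j.1.val) ^ p.1.val * (α₂ ^ j.2.val) ^ p.2.val

/-- Bivariate inverse DFT. -/
def invDFT2 {L : Type} [Field L] [NeZero r₁] [NeZero r₂] (α₁ α₂ : L)
    (g : ZMod r₁ × ZMod r₂ → L) : ZMod r₁ × ZMod r₂ → L :=
  fun j => ((r₁ : L) * (r₂ : L))⁻¹ * eval2 g (α₁⁻¹ ^ j.1.val) (α₂⁻¹ ^ j.2.val)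

/-- `Z̄(g)` for a bivariate polynomial. -/
def nonzeros2 {L : Type} [CommRing L] [NeZero r₁] [NeZero r₂]
    (g : ZMod r₁ × ZMod r₂ → L) : Set (L × L) :=
  {p | p.1 ^ r₁ = 1 ∧ p.2 ^ r₂ = 1 ∧ eval2 g p.1 p.2 ≠ 0}

/-- Multiplication (convolution) in `L(r₁,r₂)`. -/
def conv2 {L : Type} [CommRing L] [NeZero r₁] [NeZero r₂]
    (u w : ZMod r₁ × ZMod r₂ → L) : ZMod r₁ × ZMod r₂ → L :=
  fun p => ∑ t : ZMod r₁ × ZMod r₂, u t * w (p.1 - t.1, p.2 - t.2)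

/-- The coefficient matrix of the product `a(X₁)·b(X₂)`. -/
def prodPoly {L : Type} [Mul L] (a : ZMod r₁ → L) (b : ZMod r₂ → L) :
    ZMod r₁ × ZMod r₂ → L :=
  fun p => a p.1 * b p.2

/-- `g(X₁,v)`: the coefficient vector in `X₁` of `g` with `X₂` evaluated at `v`. -/
def secEval {L : Type} [CommRing L] [NeZero r₂] (g : ZMod r₁ × ZMod r₂ → L) (v : L) :
    ZMod r₁ → L :=
  fun i => evalV (row g i) v

/-- `g(u,X₂)`: the coefficient vector in `X₂` of `g` with `X₁` evaluated at `u`. -/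
def fstEval {L : Type} [CommRing L] [NeZero r₁] (g : ZMod r₁ × ZMod r₂ → L) (u : L) :
    ZMod r₂ → L :=
  fun j => evalV (col g j) u

/-- Defining set of a bivariate abelian code. -/
def defSet2 {F L : Type} [Field F] [CommRing L] [Algebra F L] [NeZero r₁] [NeZero r₂]
    (α₁ α₂ : L) (C : Set (ZMod r₁ × ZMod r₂ → F)) : Set (ZMod r₁ × ZMod r₂) :=
  {j | ∀ c ∈ C, dft2 α₁ α₂ c j = 0}

/-- Multiplication by `X₁`. -/
def shiftX {R : Type} (v : ZMod r₁ × ZMod r₂ → R) : ZMod r₁ × ZMod r₂ → R :=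
  fun p => v (p.1 - 1, p.2)

/-- Multiplication by `X₂`. -/
def shiftY {R : Type} (v : ZMod r₁ × ZMod r₂ → R) : ZMod r₁ × ZMod r₂ → R :=
  fun p => v (p.1, p.2 - 1)

/-- A bivariate abelian code: an ideal of `F[X₁,X₂]/(X₁^{r₁}-1, X₂^{r₂}-1)`. -/
def IsAbelianCode2 {F : Type} [Field F] (C : Set (ZMod r₁ × ZMod r₂ → F)) : Prop :=
  (0 : ZMod r₁ × ZMod r₂ → F) ∈ C ∧ (∀ u ∈ C, ∀ v ∈ C, u + v ∈ C) ∧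
    (∀ (a : F), ∀ v ∈ C, a • v ∈ C) ∧ (∀ v ∈ C, shiftX v ∈ C) ∧ (∀ v ∈ C, shiftY v ∈ C)

/-- The abelian code (ideal) generated by `c₀`. -/
def codeGen2 {F : Type} [Field F] (c₀ : ZMod r₁ × ZMod r₂ → F) :
    Set (ZMod r₁ × ZMod r₂ → F) :=
  ⋂₀ {S | IsAbelianCode2 S ∧ c₀ ∈ S}

/-- `(B,ᾱ)`-apparent distance of a bivariate abelian code. -/
def DeltaCodeAt2 {L : Type} [Field L] [Algebra F L] [NeZero r₁] [NeZero r₂]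
    (B : Set (DSBound F)) (α₁ α₂ : L) (C : Set (ZMod r₁ × ZMod r₂ → F)) : ℕ :=
  sInf {m | ∃ c ∈ C, c ≠ 0 ∧ m = Delta2 B (dft2 α₁ α₂ c)}

/-- `B`-apparent distance of a bivariate abelian code. -/
def DeltaCode2 (L : Type) [Field L] [Algebra F L] [NeZero r₁] [NeZero r₂]
    (B : Set (DSBound F)) (C : Set (ZMod r₁ × ZMod r₂ → F)) : ℕ :=
  sSup {m | ∃ α₁ α₂ : L, IsPrimitiveRoot α₁ r₁ ∧ IsPrimitiveRoot α₂ r₂ ∧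
    m = DeltaCodeAt2 B α₁ α₂ C}

/-- BCH `ᾱ`-apparent distance of a bivariate abelian code. -/
def bchDeltaCodeAt2 {L : Type} [Field L] [Algebra F L] [NeZero r₁] [NeZero r₂]
    (α₁ α₂ : L) (C : Set (ZMod r₁ × ZMod r₂ → F)) : ℕ :=
  sInf {m | ∃ c ∈ C, c ≠ 0 ∧ m = bchDelta (dft2 α₁ α₂ c)}

/-- BCH apparent distance of a bivariate abelian code. -/
def bchDeltaCode2 (L : Type) [Field L] [Algebra F L] [NeZero r₁] [NeZero r₂]
    (C : Set (ZMod r₁ × ZMod r₂ → F)) : ℕ :=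
  sSup {m | ∃ α₁ α₂ : L, IsPrimitiveRoot α₁ r₁ ∧ IsPrimitiveRoot α₂ r₂ ∧
    m = bchDeltaCodeAt2 α₁ α₂ C}

/-! ### q-orbits in two variables -/

def qOrbit2 (q : ℕ) (a : ZMod r₁ × ZMod r₂) : Set (ZMod r₁ × ZMod r₂) :=
  {x | ∃ t : ℕ, x = ((q : ZMod r₁) ^ t * a.1, (q : ZMod r₂) ^ t * a.2)}

def IsUnionOfQOrbits2 (q : ℕ) (D : Set (ZMod r₁ × ZMod r₂)) : Prop :=
  ∀ a ∈ D, qOrbit2 q a ⊆ D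

/-- The matrix afforded by `D`. -/
def afforded2 {L : Type} [Zero L] [One L] (D : Set (ZMod r₁ × ZMod r₂)) :
    ZMod r₁ × ZMod r₂ → L :=
  fun p => if p ∈ D then 0 else 1

/-- Minimum `B`-apparent distance `B-mad(M)` of a matrix. -/
def Bmad2 {L : Type} [Zero L] (B : Set (DSBound F)) (q : ℕ)
    (M : ZMod r₁ × ZMod r₂ → L) : ℕ :=
  sInf {m | ∃ P : ZMod r₁ × ZMod r₂ → L, P ≠ 0 ∧ IsUnionOfQOrbits2 q {p | P p ≠ 0} ∧
    {p | P p ≠ 0} ⊆ {p | M p ≠ 0} ∧ m = Delta2 B P}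

/-- Minimum BCH apparent distance of a matrix. -/
def bchBmad2 {L : Type} [Zero L] (q : ℕ) (M : ZMod r₁ × ZMod r₂ → L) : ℕ :=
  sInf {m | ∃ P : ZMod r₁ × ZMod r₂ → L, P ≠ 0 ∧ IsUnionOfQOrbits2 q {p | P p ≠ 0} ∧
    {p | P p ≠ 0} ⊆ {p | M p ≠ 0} ∧ m = bchDelta P}

/-! ### BCH codes -/

/-- The `q`-cyclotomic coset of `b` modulo `n`. -/
def cycCoset (q : ℕ) {n : ℕ} (b : ZMod n) : Set (ZMod n) :=
  {x | ∃ t : ℕ, x = (q : ZMod n) ^ t * b}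

/-- The defining set `∪_{l=0}^{δ-2} C_q(b+l)` of the BCH code `B_q(α,δ,b)`. -/
def bchDefSet (q : ℕ) {n : ℕ} (δ : ℕ) (b : ZMod n) : Set (ZMod n) :=
  ⋃ l ∈ Finset.range (δ - 1), cycCoset q (b + (l : ZMod n))

/-- `C` is a BCH cyclic code (in the classical sense) with respect to `α`. -/
def IsBCHCyclicCode {F L : Type} [Field F] [Fintype F] [CommRing L] [Algebra F L]
    {n : ℕ} [NeZero n] (α : L) (C : Set (ZMod n → F)) : Prop :=
  ∃ (δ : ℕ) (b : ZMod n), 2 ≤ δ ∧ δ ≤ n ∧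
    DS.defSet1 α C = bchDefSet (Fintype.card F) δ b

/-- The defining set of a bivariate BCH code with parameters `γ, δ₁, δ₂, b₁, b₂`. -/
def bivarBCHDefSet (q : ℕ) (γ : Set (Fin 2)) (δ₁ δ₂ : ℕ) (b₁ : ZMod r₁) (b₂ : ZMod r₂) :
    Set (ZMod r₁ × ZMod r₂) :=
  {p | 0 ∈ γ ∧ ∃ l ∈ Finset.range (δ₁ - 1), ∃ a : ZMod r₁ × ZMod r₂,
      a.1 = b₁ + (l : ZMod r₁) ∧ p ∈ qOrbit2 q a} ∪
  {p | 1 ∈ γ ∧ ∃ l ∈ Finset.range (δ₂ - 1), ∃ a : ZMod r₁ × ZMod r₂,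
      a.2 = b₂ + (l : ZMod r₂) ∧ p ∈ qOrbit2 q a}

/-- `C` is a bivariate BCH code with respect to `(α₁,α₂)`. -/
def IsBivarBCH {F L : Type} [Field F] [Fintype F] [CommRing L] [Algebra F L]
    [NeZero r₁] [NeZero r₂] (α₁ α₂ : L) (C : Set (ZMod r₁ × ZMod r₂ → F)) : Prop :=
  ∃ (γ : Set (Fin 2)) (δ₁ δ₂ : ℕ) (b₁ : ZMod r₁) (b₂ : ZMod r₂),
    (0 ∈ γ → 2 ≤ δ₁ ∧ δ₁ ≤ r₁) ∧ (1 ∈ γ → 2 ≤ δ₂ ∧ δ₂ ≤ r₂) ∧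
    defSet2 α₁ α₂ C = bivarBCHDefSet (Fintype.card F) γ δ₁ δ₂ b₁ b₂

/-- Permutation equivalence of codes (permutation of the coordinate positions). -/
def PermEquiv {F : Type} [Field F] (C C' : Set (ZMod r₁ × ZMod r₂ → F)) : Prop :=
  ∃ σ : Equiv.Perm (ZMod r₁ × ZMod r₂), C' = (fun c => c ∘ σ) '' C

end DS2

end

open DS DS2

namespace BivarBCH

/-! ### Powers of a root of unity indexed by `ZMod n` -/

section Characters

variable {n : ℕ} {L : Type} [Field L] {β : L}

lemma ch_add [NeZero n] (h : β ^ n = 1) (x y : ZMod n) :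
    β ^ (x + y).val = β ^ x.val * β ^ y.val := by
  rw [ZMod.val_add, ← pow_eq_pow_mod _ h, pow_add]

lemma ch_mul (h : β ^ n = 1) (x y : ZMod n) :
    (β ^ x.val) ^ y.val = β ^ (x * y).val := by
  rw [ZMod.val_mul, ← pow_eq_pow_mod _ h, pow_mul]

lemma ch_neg [NeZero n] (h : β ^ n = 1) (x : ZMod n) : β ^ (-x).val = (β ^ x.val)⁻¹ := by
  apply eq_inv_of_mul_eq_one_left
  rw [← ch_add h]
  simp

lemma ch_inv_mul [NeZero n] (h : β ^ n = 1) (x y : ZMod n) :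
    (β⁻¹ ^ x.val) ^ y.val = β ^ (-(x * y)).val := by
  rw [ch_neg h, ← ch_mul h, inv_pow, inv_pow]

lemma ch_natCast_mul (h : β ^ n = 1) (t : ℕ) (x : ZMod n) :
    β ^ ((t : ZMod n) * x).val = (β ^ x.val) ^ t := by
  rw [ZMod.val_mul, ZMod.val_natCast, ← pow_mul, ← pow_eq_pow_mod _ h,
    pow_eq_pow_mod (x.val * t) h, pow_eq_pow_mod (t % n * x.val) h]
  congr 1
  rw [Nat.mod_mul_mod, mul_comm]

lemma ch_inj [NeZero n] (h : IsPrimitiveRoot β n) {x y : ZMod n} (hxy : β ^ x.val = β ^ y.val) :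
    x = y :=
  ZMod.val_injective n (h.pow_inj (ZMod.val_lt x) (ZMod.val_lt y) hxy)

lemma ch_orth [NeZero n] (h : IsPrimitiveRoot β n) (b : ZMod n) :
    ∑ x : ZMod n, β ^ (x * b).val = if b = 0 then (n : L) else 0 := by
  have := AddChar.sum_mulShift b (AddChar.zmodChar_primitive_of_primitive_root n h)
  simp only [AddChar.zmodChar_apply, ZMod.card] at this
  rw [this]
  split_ifs <;> simp

/-- The BCH bound: by a Vandermonde-type argument, a nonzero vector whose Fourier transform has
`a - 1` consecutive zeros has weight at least `a`. -/
lemma bch_bound [NeZero n] (hβ : IsPrimitiveRoot β n) (v : ZMod n → L) (hv : v ≠ 0) (i0 : ZMod n) (a : ℕ)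
    (hz : ∀ t < a - 1, ∑ p, v p * β ^ ((i0 + (t : ZMod n)) * p).val = 0) : a ≤ wt v := by
  have h1 := hβ.pow_eq_one
  have hβ0 : β ≠ 0 := hβ.ne_zero (NeZero.ne n)
  by_contra hlt
  push Not at hlt
  obtain ⟨p0, hp0⟩ := Function.ne_iff.mp hv
  simp only [Pi.zero_apply] at hp0
  unfold wt at hlt
  set S := Finset.univ.filter (fun p => v p ≠ 0) with hS
  have hp0S : p0 ∈ S := by simp [hS, hp0]
  -- `P` vanishes at every point of the support of `v` except `p0`
  let P : L[X] := ∏ s ∈ S.erase p0, (X - C (β ^ s.val))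
  have hdeg : P.natDegree < a - 1 := by
    have : P.natDegree = (S.erase p0).card := by
      exact natDegree_finsetProd_X_sub_C_eq_card _ _
    rw [this, Finset.card_erase_of_mem hp0S]
    have := Finset.card_pos.2 ⟨p0, hp0S⟩
    omega
  have e1 : ∑ p, v p * β ^ (i0 * p).val * P.eval (β ^ p.val) = 0 := by
    simp_rw [eval_eq_sum_range' hdeg, Finset.mul_sum]
    rw [Finset.sum_comm]
    apply Finset.sum_eq_zero
    intro t ht
    have h2 := hz t (Finset.mem_range.1 ht)
    calc _ = P.coeff t * ∑ p, v p * β ^ ((i0 + (t : ZMod n)) * p).val := by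
          rw [Finset.mul_sum]
          refine Finset.sum_congr rfl fun p _ => ?_
          rw [add_mul, ch_add h1, ch_natCast_mul h1]
          ring
      _ = 0 := by rw [h2, mul_zero]
  rw [Finset.sum_eq_single p0] at e1
  · rcases mul_eq_zero.1 e1 with h | h
    · rcases mul_eq_zero.1 h with h | h
      · exact hp0 h
      · exact pow_ne_zero _ hβ0 h
    · rw [eval_prod, Finset.prod_eq_zero_iff] at h
      obtain ⟨s, hs, hs'⟩ := h
      simp only [eval_sub, eval_X, eval_C, sub_eq_zero] at hs'
      exact (Finset.mem_erase.1 hs).1 (ch_inj hβ hs').symm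
  · intro p _ hp
    by_cases hvp : v p = 0
    · simp [hvp]
    · have : P.eval (β ^ p.val) = 0 := by
        rw [eval_prod]
        apply Finset.prod_eq_zero (i := p)
        · simp [hS, hp, hvp]
        · simp
      rw [this, mul_zero]
  · simp

lemma wt_le [NeZero n] (v : ZMod n → L) : wt v ≤ n := by
  have := Finset.card_le_univ (Finset.univ.filter fun i => v i ≠ 0)
  simpa [wt, ZMod.card] using this

/-- Injectivity of the Fourier transform; `n` consecutive zeros would force weight `n + 1`. -/
lemma dft_inj [NeZero n] (hβ : IsPrimitiveRoot β n) (v : ZMod n → L)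
    (hz : ∀ j, ∑ p, v p * β ^ (j * p).val = 0) : v = 0 := by
  by_contra hv
  have := bch_bound hβ v hv 0 (n + 1) (fun t _ => hz _)
  have := wt_le v
  omega

end Characters

/-! ### The optimal BCH bound of a set -/

section Opt

variable {n : ℕ} {N : Set (ZMod n)}

lemma bchRel_le [NeZero n] (hN : N ≠ Set.univ) {a : ℕ} (ha : bchRel N a) : a ≤ n := by
  rcases ha with rfl | ⟨h2, i0, hi⟩
  · exact NeZero.one_le
  · by_contra hlt
    push Not at hlt
    apply hN
    ext x
    simp only [Set.mem_univ, iff_true]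
    have := hi (x - i0).val (lt_of_lt_of_le (ZMod.val_lt _) (by omega))
    simpa using this

lemma bchRel_opt [NeZero n] (hN : N ≠ Set.univ) : bchRel N (bchOpt n N) :=
  Nat.sSup_mem ⟨1, Or.inl rfl⟩ ⟨n, fun _ h => bchRel_le hN h⟩

lemma le_bchOpt [NeZero n] (hN : N ≠ Set.univ) {a : ℕ} (ha : HasConsecutive N a) : a ≤ bchOpt n N := by
  have key : ∀ {b : ℕ}, bchRel N b → b ≤ bchOpt n N := fun h =>
    le_csSup (s := {a | bchRel N a}) ⟨n, fun _ h => bchRel_le hN h⟩ h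
  rcases le_or_gt 2 a with h | h
  · exact key (Or.inr ⟨h, ha⟩)
  · exact le_trans (by omega) (key (Or.inl rfl))

lemma bchOpt_consec [NeZero n] (hN : N ≠ Set.univ) : HasConsecutive N (bchOpt n N) := by
  rcases bchRel_opt hN with h | h
  · rw [h]
    exact ⟨0, fun t ht => by omega⟩
  · exact h.2

lemma one_le_bchOpt [NeZero n] (hN : N ≠ Set.univ) : 1 ≤ bchOpt n N :=
  le_bchOpt hN ⟨0, fun t ht => by omega⟩

lemma bchOpt_le_wt [NeZero n] {L : Type} [Field L] {β : L} (hβ : IsPrimitiveRoot β n) (v : ZMod n → L)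
    (hv : v ≠ 0) (hN : N ≠ Set.univ) (hz : ∀ j ∈ N, ∑ p, v p * β ^ (j * p).val = 0) :
    bchOpt n N ≤ wt v := by
  obtain ⟨i0, hi⟩ := bchOpt_consec hN
  exact bch_bound hβ v hv i0 _ fun t ht => hz _ (hi t ht)

lemma compl_supp_ne_univ {L : Type} [Zero L] {v : ZMod n → L} (hv : v ≠ 0) :
    {i | v i ≠ 0}ᶜ ≠ Set.univ := by
  obtain ⟨p, hp⟩ := Function.ne_iff.mp hv
  intro h
  have : p ∈ {i | v i ≠ 0}ᶜ := h ▸ Set.mem_univ p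
  exact this hp

end Opt

/-! ### Divisors of `X ^ n - 1` -/

section Divisor

variable {n : ℕ} [NeZero n] {L : Type} [Field L] {v : ZMod n → L}

lemma toPoly_coeff (v : ZMod n → L) {k : ℕ} (hk : k < n) :
    (toPoly v).coeff k = v (k : ZMod n) := by
  unfold toPoly
  rw [finsetSum_coeff, Finset.sum_eq_single (k : ZMod n)]
  · simp [coeff_X_pow, ZMod.val_natCast, Nat.mod_eq_of_lt hk]
  · intro i _ hi
    rw [coeff_C_mul, coeff_X_pow, if_neg, mul_zero]
    rintro rfl
    exact hi (by simp)
  · simp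

lemma X_pow_sub_one_ne : (X ^ n - 1 : L[X]) ≠ 0 := by
  simpa using X_pow_sub_C_ne_zero (NeZero.pos n) (1 : L)

lemma ne_zero_of_dvd (hd : toPoly v ∣ (X ^ n - 1 : L[X])) : v ≠ 0 := by
  rintro rfl
  apply X_pow_sub_one_ne (n := n) (L := L)
  rw [← zero_dvd_iff]
  simpa [toPoly] using hd

/-- The `n - 1 - deg` top coefficients of `v` form a run of consecutive zeros. -/
lemma sub_deg_le_bchV (hd : toPoly v ∣ (X ^ n - 1 : L[X])) :
    n - (toPoly v).natDegree ≤ bchV v := by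
  have hv := ne_zero_of_dvd hd
  rw [bchV, if_neg hv]
  apply le_bchOpt (compl_supp_ne_univ hv)
  refine ⟨((toPoly v).natDegree + 1 : ℕ), fun t ht => ?_⟩
  simp only [Set.mem_compl_iff, Set.mem_ofPred_eq, not_not]
  rw [← Nat.cast_add, ← toPoly_coeff v (by omega)]
  exact coeff_eq_zero_of_natDegree_lt (by omega)

lemma evalV_shiftBy {x : L} {β : L} (h1 : β ^ n = 1) (j h : ZMod n)
    (hx : x = β ^ (-j).val) :
    evalV (shiftBy h.val v) x = β ^ (-j * h).val * (toPoly v).eval x := by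
  subst hx
  unfold evalV shiftBy toPoly
  rw [eval_finsetSum, Finset.mul_sum, ← Equiv.sum_comp (Equiv.addRight h)]
  refine Finset.sum_congr rfl fun i _ => ?_
  simp only [Equiv.coe_addRight, ZMod.natCast_val, ZMod.cast_id', id_eq, add_sub_cancel_right,
    eval_mul, eval_C, eval_pow, eval_X, ch_mul h1, mul_add, ch_add h1]
  ring

/-- The inverse transform of a shifted divisor `v` of `X ^ n - 1` is supported on the non-roots
of `v`, which are roots of the cofactor; hence its weight is at most `n - deg v`. -/
lemma wt_inv_le {β : L} (hβ : IsPrimitiveRoot β n) (hd : toPoly v ∣ (X ^ n - 1 : L[X]))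
    (h : ZMod n) : wt (invDFT1 β (shiftBy h.val v)) ≤ bchV v := by
  refine le_trans ?_ (sub_deg_le_bchV hd)
  have h1 := hβ.pow_eq_one
  obtain ⟨Q, hQ⟩ := hd
  have hne := X_pow_sub_one_ne (n := n) (L := L)
  rw [hQ] at hne
  have hQ0 : Q ≠ 0 := right_ne_zero_of_mul hne
  have hdeg : n - (toPoly v).natDegree = Q.natDegree := by
    have := congrArg natDegree hQ
    rw [natDegree_mul (left_ne_zero_of_mul hne) hQ0] at this
    have e : (X ^ n - 1 : L[X]).natDegree = n := by
      simpa using natDegree_X_pow_sub_C (n := n) (r := (1 : L))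
    omega
  rw [hdeg]
  refine le_trans ?_ (le_trans (Multiset.toFinset_card_le _) (card_roots' Q))
  apply Finset.card_le_card_of_injOn (fun j => β ^ (-j).val)
  · intro j hj
    simp only [Finset.coe_filter, Finset.mem_univ, true_and, Set.mem_ofPred_eq] at hj
    simp only [Finset.mem_coe, Multiset.mem_toFinset, mem_roots hQ0, IsRoot.def]
    have hx : β⁻¹ ^ j.val = β ^ (-j).val := by rw [ch_neg h1, inv_pow]
    rw [invDFT1, evalV_shiftBy h1 j h hx, hx] at hj
    have hz : (X ^ n - 1 : L[X]).eval (β ^ (-j).val) = 0 := by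
      simp [pow_right_comm β _ n, h1]
    rw [hQ, eval_mul] at hz
    rcases mul_eq_zero.1 hz with h0 | h0
    · simp [h0] at hj
    · exact h0
  · intro x _ y _ hxy
    exact neg_injective (ch_inj hβ hxy)

end Divisor

/-! ### The two-variable Fourier transform -/

section Transform

variable {r₁ r₂ : ℕ} [NeZero r₁] [NeZero r₂] {L : Type} [Field L] {β₁ β₂ : L}

/-- The two-variable Fourier transform of a matrix with entries in `L`. -/
def T (β₁ β₂ : L) (c : ZMod r₁ × ZMod r₂ → L) : ZMod r₁ × ZMod r₂ → L :=
  fun j => ∑ p : ZMod r₁ × ZMod r₂, c p * β₁ ^ (j.1 * p.1).val * β₂ ^ (j.2 * p.2).val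

lemma dft2_eq_T {F : Type} [Field F] [Algebra F L] (h₁ : β₁ ^ r₁ = 1) (h₂ : β₂ ^ r₂ = 1)
    (c : ZMod r₁ × ZMod r₂ → F) : dft2 β₁ β₂ c = T β₁ β₂ (fun p => algebraMap F L (c p)) := by
  funext j
  simp only [dft2, T, ch_mul h₁, ch_mul h₂]

/-- The two-variable transform computed one variable at a time. -/
lemma T_eq (c : ZMod r₁ × ZMod r₂ → L) (j : ZMod r₁ × ZMod r₂) :
    T β₁ β₂ c j = ∑ p₂, (∑ p₁, c (p₁, p₂) * β₁ ^ (j.1 * p₁).val) * β₂ ^ (j.2 * p₂).val := by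
  rw [T, Fintype.sum_prod_type_right]
  simp only [Finset.sum_mul]

lemma T_swap (c : ZMod r₁ × ZMod r₂ → L) :
    T β₂ β₁ (c ∘ Prod.swap) = T β₁ β₂ c ∘ Prod.swap := by
  funext j
  simp only [T, Function.comp]
  rw [← Equiv.sum_comp (Equiv.prodComm (ZMod r₁) (ZMod r₂))]
  refine Finset.sum_congr rfl fun p _ => ?_
  simp only [Equiv.prodComm_apply, Prod.swap_swap, Prod.fst_swap, Prod.snd_swap]
  ring

lemma partial_eq_zero (hβ₂ : IsPrimitiveRoot β₂ r₂) (c : ZMod r₁ × ZMod r₂ → L) {j₁ : ZMod r₁}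
    (h : row (T β₁ β₂ c) j₁ = 0) (p₂ : ZMod r₂) :
    ∑ p₁, c (p₁, p₂) * β₁ ^ (j₁ * p₁).val = 0 := by
  have := dft_inj hβ₂ (fun p₂ => ∑ p₁, c (p₁, p₂) * β₁ ^ (j₁ * p₁).val) fun j₂ => by
    have := congrFun h j₂
    rw [row, T_eq] at this
    exact this
  exact congrFun this p₂

lemma T_inj (hβ₁ : IsPrimitiveRoot β₁ r₁) (hβ₂ : IsPrimitiveRoot β₂ r₂)
    (c : ZMod r₁ × ZMod r₂ → L) (h : T β₁ β₂ c = 0) : c = 0 := by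
  funext ⟨p₁, p₂⟩
  have := dft_inj hβ₁ (fun p₁ => c (p₁, p₂)) fun j₁ =>
    partial_eq_zero hβ₂ c (funext fun j₂ => congrFun h (j₁, j₂)) p₂
  exact congrFun this p₁

lemma T_invDFT2 (hβ₁ : IsPrimitiveRoot β₁ r₁) (hβ₂ : IsPrimitiveRoot β₂ r₂)
    (g : ZMod r₁ × ZMod r₂ → L) : T β₁ β₂ (invDFT2 β₁ β₂ g) = g := by
  have h₁ := hβ₁.pow_eq_one
  have h₂ := hβ₂.pow_eq_one
  have n₁ : (r₁ : L) ≠ 0 := (hβ₁.neZero').out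
  have n₂ : (r₂ : L) ≠ 0 := (hβ₂.neZero').out
  funext j
  have key : T β₁ β₂ (invDFT2 β₁ β₂ g) j = ((r₁ : L) * r₂)⁻¹ *
      ∑ k : ZMod r₁ × ZMod r₂, g k * ((∑ x : ZMod r₁, β₁ ^ (x * (j.1 - k.1)).val) *
        ∑ y : ZMod r₂, β₂ ^ (y * (j.2 - k.2)).val) := by
    have hpr : ∀ (f : ZMod r₁ → L) (h : ZMod r₂ → L),
        (∑ x, f x) * ∑ y, h y = ∑ z : ZMod r₁ × ZMod r₂, f z.1 * h z.2 := fun f h => by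
      rw [Finset.sum_mul_sum, Fintype.sum_prod_type]
    simp only [hpr]
    simp only [T, invDFT2, eval2, Finset.mul_sum, Finset.sum_mul]
    rw [Finset.sum_comm]
    refine Finset.sum_congr rfl fun k _ => Finset.sum_congr rfl fun x _ => ?_
    rw [ch_inv_mul h₁, ch_inv_mul h₂, show x.1 * (j.1 - k.1) = -(x.1 * k.1) + j.1 * x.1 by ring,
      show x.2 * (j.2 - k.2) = -(x.2 * k.2) + j.2 * x.2 by ring, ch_add h₁, ch_add h₂]
    ring
  rw [key]
  simp only [ch_orth hβ₁, ch_orth hβ₂, sub_eq_zero]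
  rw [Finset.sum_eq_single j]
  · simp only [if_true]
    field_simp
  · intro k _ hk
    by_cases e₁ : j.1 = k.1
    · by_cases e₂ : j.2 = k.2
      · exact absurd (Prod.ext e₁ e₂).symm hk
      · simp [e₂]
    · simp [e₁]
  · simp

lemma dft_invDFT1 (hβ₁ : IsPrimitiveRoot β₁ r₁) (g : ZMod r₁ → L) (j : ZMod r₁) :
    ∑ p, invDFT1 β₁ g p * β₁ ^ (j * p).val = g j := by
  have h₁ := hβ₁.pow_eq_one
  have n₁ : (r₁ : L) ≠ 0 := (hβ₁.neZero').out
  have key : ∑ p, invDFT1 β₁ g p * β₁ ^ (j * p).val = (r₁ : L)⁻¹ *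
      ∑ k : ZMod r₁, g k * ∑ x : ZMod r₁, β₁ ^ (x * (j - k)).val := by
    simp only [invDFT1, evalV, Finset.mul_sum, Finset.sum_mul]
    rw [Finset.sum_comm]
    refine Finset.sum_congr rfl fun k _ => Finset.sum_congr rfl fun x _ => ?_
    rw [ch_inv_mul h₁, show x * (j - k) = -(x * k) + j * x by ring, ch_add h₁]
    ring
  rw [key]
  simp only [ch_orth hβ₁, sub_eq_zero]
  rw [Finset.sum_eq_single j]
  · simp only [if_true]
    field_simp
  · intro k _ hk
    simp [Ne.symm hk]
  · simp

lemma invDFT_prod (a : ZMod r₁ → L) (b : ZMod r₂ → L) (p : ZMod r₁ × ZMod r₂) :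
    invDFT1 β₁ a p.1 * invDFT1 β₂ b p.2 = invDFT2 β₁ β₂ (prodPoly a b) p := by
  simp only [invDFT1, invDFT2, evalV, eval2, prodPoly, Fintype.sum_prod_type, mul_inv]
  rw [mul_mul_mul_comm, Finset.sum_mul_sum]
  congr 1
  refine Finset.sum_congr rfl fun k _ => Finset.sum_congr rfl fun x _ => ?_
  ring

end Transform

/-! ### Apparent distance of a transform -/

section Apparent

variable {r₁ r₂ : ℕ} [NeZero r₁] [NeZero r₂] {L : Type} [Field L] {β₁ β₂ : L}

lemma wt_eq_sum_cols (c : ZMod r₁ × ZMod r₂ → L) :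
    wt c = ∑ p₂, wt (fun p₁ => c (p₁, p₂)) := by
  simp only [wt, Finset.card_filter]
  rw [Fintype.sum_prod_type_right]

/-- If the row `k` of the transform attains `ε₁`, the partial transform `e` of `c` at `k` has
weight at least `ε₁`, and every column of `c` where `e` does not vanish has weight at least
`ω₁`. -/
lemma bchD1_le_wt (hβ₁ : IsPrimitiveRoot β₁ r₁) (hβ₂ : IsPrimitiveRoot β₂ r₂)
    (c : ZMod r₁ × ZMod r₂ → L) (hM : T β₁ β₂ c ≠ 0) : bchD1 (T β₁ β₂ c) ≤ wt c := by
  set M := T β₁ β₂ c with hMdef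
  have hne : (supp1 M).Nonempty := by
    obtain ⟨p, hp⟩ := Function.ne_iff.mp hM
    exact ⟨p.1, fun h => hp (congrFun h p.2)⟩
  have hN : (supp1 M)ᶜ ≠ Set.univ := by
    intro h
    rw [Set.compl_univ_iff] at h
    exact hne.ne_empty h
  obtain ⟨k, hk, hkε⟩ : bchEps1 M ∈ (fun k => bchV (row M k)) '' supp1 M :=
    Nat.sSup_mem (hne.image _) (Set.toFinite _).bddAbove
  let e : ZMod r₂ → L := fun p₂ => ∑ p₁, c (p₁, p₂) * β₁ ^ (k * p₁).val
  have hrow : ∀ j₂, row M k j₂ = ∑ p₂, e p₂ * β₂ ^ (j₂ * p₂).val := fun j₂ => T_eq c (k, j₂)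
  have he : e ≠ 0 := by
    intro h
    apply hk
    funext j₂
    rw [hrow, h]
    simp
  have hε : bchEps1 M ≤ wt e := by
    rw [← hkε]
    simp only
    rw [bchV, if_neg hk]
    refine bchOpt_le_wt hβ₂ e he (compl_supp_ne_univ hk) fun j hj => ?_
    rw [← hrow]
    simpa using hj
  have hω : ∀ p₂, e p₂ ≠ 0 → bchOmega1 M ≤ wt (fun p₁ => c (p₁, p₂)) := by
    intro p₂ hp
    refine bchOpt_le_wt hβ₁ _ ?_ hN fun j hj => ?_
    · intro h
      apply hp
      refine Finset.sum_eq_zero fun p₁ _ => ?_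
      have : c (p₁, p₂) = 0 := congrFun h p₁
      rw [this, zero_mul]
    · exact partial_eq_zero hβ₂ c (by simpa [supp1] using hj) p₂
  calc bchD1 M ≤ bchOmega1 M * wt e := Nat.mul_le_mul_left _ hε
    _ = ∑ p₂ ∈ Finset.univ.filter (fun p₂ => e p₂ ≠ 0), bchOmega1 M := by
        rw [Finset.sum_const, smul_eq_mul, mul_comm, wt]
    _ ≤ ∑ p₂ ∈ Finset.univ.filter (fun p₂ => e p₂ ≠ 0), wt (fun p₁ => c (p₁, p₂)) :=
        Finset.sum_le_sum fun p₂ hp => hω p₂ (Finset.mem_filter.1 hp).2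
    _ ≤ ∑ p₂, wt (fun p₁ => c (p₁, p₂)) :=
        Finset.sum_le_sum_of_subset (Finset.filter_subset _ _)
    _ = wt c := (wt_eq_sum_cols c).symm

lemma wt_comp_equiv {ι κ R : Type} [Fintype ι] [Fintype κ] [Zero R] (e : ι ≃ κ) (c : κ → R) :
    wt (c ∘ e) = wt c := by
  simp only [wt, Finset.card_filter, Function.comp]
  exact Equiv.sum_comp e (fun i => if c i ≠ 0 then 1 else 0)

lemma bchDelta_le_wt (hβ₁ : IsPrimitiveRoot β₁ r₁) (hβ₂ : IsPrimitiveRoot β₂ r₂)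
    (c : ZMod r₁ × ZMod r₂ → L) : bchDelta (T β₁ β₂ c) ≤ wt c := by
  unfold bchDelta
  split_ifs with hM
  · exact Nat.zero_le _
  · refine max_le (bchD1_le_wt hβ₁ hβ₂ c hM) ?_
    have h := bchD1_le_wt hβ₂ hβ₁ (c ∘ Prod.swap) (by
      rw [T_swap]
      intro h
      exact hM (funext fun p => congrFun h p.swap))
    rw [T_swap] at h
    exact h.trans_eq (wt_comp_equiv (Equiv.prodComm _ _) c)

/-- Runs of zero rows and zero columns bound the apparent distance from below. -/
lemma mul_le_bchDelta {M : ZMod r₁ × ZMod r₂ → L} (hM : M ≠ 0) {δ₁ δ₂ : ℕ} {b₁ : ZMod r₁}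
    {b₂ : ZMod r₂} (hrow : ∀ t : ℕ, t < δ₁ - 1 → ∀ y, M (b₁ + t, y) = 0)
    (hcol : ∀ t : ℕ, t < δ₂ - 1 → ∀ x, M (x, b₂ + t) = 0) : δ₁ * δ₂ ≤ bchDelta M := by
  obtain ⟨p, hp⟩ := Function.ne_iff.mp hM
  have hps : p.1 ∈ supp1 M := fun h => hp (congrFun h p.2)
  have hN : (supp1 M)ᶜ ≠ Set.univ := fun h => (h ▸ Set.mem_univ p.1 : p.1 ∈ (supp1 M)ᶜ) hps
  rw [bchDelta, if_neg hM]
  refine le_trans (Nat.mul_le_mul ?_ ?_) (le_max_left _ _)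
  · refine le_bchOpt hN ⟨b₁, fun t ht => ?_⟩
    simp only [supp1, Set.mem_compl_iff, Set.mem_ofPred_eq, not_not]
    exact funext fun y => hrow t ht y
  · have hr : row M p.1 ≠ 0 := hps
    have h1 : δ₂ ≤ bchV (row M p.1) := by
      rw [bchV, if_neg hr]
      refine le_bchOpt (compl_supp_ne_univ hr) ⟨b₂, fun t ht => ?_⟩
      simp only [Set.mem_compl_iff, Set.mem_ofPred_eq, not_not]
      exact hcol t ht p.1
    exact h1.trans (le_csSup (Set.toFinite _).bddAbove ⟨p.1, hps, rfl⟩)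

end Apparent

/-! ### Rationality over the finite field -/

section Rational

lemma defSet_pow_mem {q r₁ r₂ : ℕ} {γ : Set (Fin 2)} {δ₁ δ₂ : ℕ} {b₁ : ZMod r₁} {b₂ : ZMod r₂}
    {p : ZMod r₁ × ZMod r₂} (hp : p ∈ bivarBCHDefSet q γ δ₁ δ₂ b₁ b₂) (t : ℕ) :
    ((q : ZMod r₁) ^ t * p.1, (q : ZMod r₂) ^ t * p.2) ∈ bivarBCHDefSet q γ δ₁ δ₂ b₁ b₂ := by
  have horb : ∀ a : ZMod r₁ × ZMod r₂, p ∈ qOrbit2 q a →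
      ((q : ZMod r₁) ^ t * p.1, (q : ZMod r₂) ^ t * p.2) ∈ qOrbit2 q a := by
    rintro a ⟨s, rfl⟩
    exact ⟨t + s, by simp only [pow_add, mul_assoc]⟩
  rcases hp with ⟨hγ, l, hl, a, ha, hpa⟩ | ⟨hγ, l, hl, a, ha, hpa⟩
  · exact Or.inl ⟨hγ, l, hl, a, ha, horb a hpa⟩
  · exact Or.inr ⟨hγ, l, hl, a, ha, horb a hpa⟩

variable {F : Type} [Field F] [Fintype F] {L : Type} [Field L] [Algebra F L]

/-- The image of `F` in `L` consists of the roots of `X ^ q - X`. -/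
lemma mem_range_of_pow_card {x : L} (hx : x ^ Fintype.card F = x) :
    x ∈ Set.range (algebraMap F L) := by
  have hne : (X ^ Fintype.card F - X : L[X]) ≠ 0 :=
    FiniteField.X_pow_card_sub_X_ne_zero L Fintype.one_lt_card
  have hsub : Finset.univ.image (algebraMap F L) ⊆
      (X ^ Fintype.card F - X : L[X]).roots.toFinset := by
    intro y hy
    obtain ⟨z, -, rfl⟩ := Finset.mem_image.1 hy
    simp [mem_roots hne, ← map_pow, FiniteField.pow_card]
  have heq := Finset.eq_of_subset_of_card_le hsub (by
    rw [Finset.card_image_of_injective _ (algebraMap F L).injective, Finset.card_univ]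
    refine (Multiset.toFinset_card_le _).trans ((card_roots' _).trans ?_)
    rw [FiniteField.X_pow_card_sub_X_natDegree_eq L Fintype.one_lt_card])
  have : x ∈ Finset.univ.image (algebraMap F L) := by
    rw [heq]
    simp [mem_roots hne, hx]
  obtain ⟨z, -, hz⟩ := Finset.mem_image.1 this
  exact ⟨z, hz⟩

lemma equivariant_of_rational {n : ℕ} [NeZero n] {α : L} (hα : IsPrimitiveRoot α n)
    {g : ZMod n → L} (hg : ∀ i, invDFT1 α g i ∈ Set.range (algebraMap F L)) (j : ZMod n) :
    g ((Fintype.card F : ZMod n) * j) = g j ^ Fintype.card F := by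
  have h1 := hα.pow_eq_one
  choose c hc using hg
  have hfrob : ∀ x : L, x ^ Fintype.card F = FiniteField.frobeniusAlgHom F L x := fun _ => rfl
  rw [← dft_invDFT1 hα g, ← dft_invDFT1 hα g j, hfrob, map_sum]
  refine Finset.sum_congr rfl fun p _ => ?_
  rw [map_mul, ← hc, AlgHom.commutes, ← hfrob, mul_assoc, ch_natCast_mul h1]

variable {r₁ r₂ : ℕ} [NeZero r₁] [NeZero r₂] {β₁ β₂ : L}

lemma rational_of_equivariant (hr₁ : Nat.Coprime r₁ (Fintype.card F))
    (hr₂ : Nat.Coprime r₂ (Fintype.card F)) (h₁ : β₁ ^ r₁ = 1) (h₂ : β₂ ^ r₂ = 1)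
    {g : ZMod r₁ × ZMod r₂ → L}
    (hg : ∀ j, g ((Fintype.card F : ZMod r₁) * j.1, (Fintype.card F : ZMod r₂) * j.2) =
      g j ^ Fintype.card F) (p : ZMod r₁ × ZMod r₂) :
    invDFT2 β₁ β₂ g p ∈ Set.range (algebraMap F L) := by
  apply mem_range_of_pow_card
  have hfrob : ∀ x : L, x ^ Fintype.card F = FiniteField.frobeniusAlgHom F L x := fun _ => rfl
  let u₁ := ZMod.unitOfCoprime _ hr₁.symm
  let u₂ := ZMod.unitOfCoprime _ hr₂.symm
  rw [hfrob, invDFT2, map_mul, eval2, map_sum, map_inv₀, map_mul, map_natCast, map_natCast]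
  congr 1
  rw [← Equiv.sum_comp ((Units.mulLeft u₁).prodCongr (Units.mulLeft u₂))
    (fun k => g k * (β₁⁻¹ ^ p.1.val) ^ k.1.val * (β₂⁻¹ ^ p.2.val) ^ k.2.val)]
  refine Finset.sum_congr rfl fun k _ => ?_
  have e₁ : ∀ x y : ZMod r₁, -(x * ((Fintype.card F : ZMod r₁) * y)) =
      (Fintype.card F : ZMod r₁) * -(x * y) := fun x y => by ring
  have e₂ : ∀ x y : ZMod r₂, -(x * ((Fintype.card F : ZMod r₂) * y)) =
      (Fintype.card F : ZMod r₂) * -(x * y) := fun x y => by ring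
  simp only [Equiv.prodCongr_apply, Prod.map, Units.mulLeft_apply, u₁, u₂,
    ZMod.coe_unitOfCoprime, hg, ← hfrob, ch_inv_mul h₁, ch_inv_mul h₂, e₁, e₂,
    ch_natCast_mul h₁, ch_natCast_mul h₂, mul_pow]

lemma exists_pow_eq_one {q : ℕ} (hr₁ : Nat.Coprime r₁ q) (hr₂ : Nat.Coprime r₂ q) :
    ∃ m, (q : ZMod r₁) ^ (m + 1) = 1 ∧ (q : ZMod r₂) ^ (m + 1) = 1 := by
  refine ⟨r₁.totient * r₂.totient - 1, ?_⟩
  have e : r₁.totient * r₂.totient - 1 + 1 = r₁.totient * r₂.totient :=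
    Nat.sub_add_cancel (Nat.mul_pos (Nat.totient_pos.2 (NeZero.pos _))
      (Nat.totient_pos.2 (NeZero.pos _)))
  have t₁ : (q : ZMod r₁) ^ r₁.totient = 1 := by
    have := congrArg Units.val (ZMod.pow_totient (ZMod.unitOfCoprime q hr₁.symm))
    rwa [Units.val_pow_eq_pow_val, ZMod.coe_unitOfCoprime] at this
  have t₂ : (q : ZMod r₂) ^ r₂.totient = 1 := by
    have := congrArg Units.val (ZMod.pow_totient (ZMod.unitOfCoprime q hr₂.symm))
    rwa [Units.val_pow_eq_pow_val, ZMod.coe_unitOfCoprime] at this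
  rw [e]
  exact ⟨by rw [pow_mul, t₁, one_pow], by rw [mul_comm, pow_mul, t₂, one_pow]⟩

/-- Multiplication by `q` preserves membership in both directions, as `q` has finite order modulo
`r₁` and `r₂`. -/
lemma defSet_mul_mem_iff {q : ℕ} (hr₁ : Nat.Coprime r₁ q) (hr₂ : Nat.Coprime r₂ q)
    {γ : Set (Fin 2)} {δ₁ δ₂ : ℕ} {b₁ : ZMod r₁} {b₂ : ZMod r₂} (p : ZMod r₁ × ZMod r₂) :
    ((q : ZMod r₁) * p.1, (q : ZMod r₂) * p.2) ∈ bivarBCHDefSet q γ δ₁ δ₂ b₁ b₂ ↔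
      p ∈ bivarBCHDefSet q γ δ₁ δ₂ b₁ b₂ := by
  constructor
  · intro h
    obtain ⟨m, m₁, m₂⟩ := exists_pow_eq_one hr₁ hr₂
    have := defSet_pow_mem h m
    simpa only [← mul_assoc, ← pow_succ, m₁, m₂, one_mul] using this
  · intro h
    simpa using defSet_pow_mem h 1

end Rational

/-! ### The codes with a prescribed defining set -/

section Code

variable {F : Type} [Field F] {L : Type} [Field L] [Algebra F L]
  {r₁ r₂ : ℕ} [NeZero r₁] [NeZero r₂] {β₁ β₂ : L}

/-- The code of all `F`-matrices whose transform at `(β₁, β₂)` vanishes on `D`. -/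
def codeOf (F : Type) [Field F] [Algebra F L] (D : Set (ZMod r₁ × ZMod r₂)) (β₁ β₂ : L) :
    Set (ZMod r₁ × ZMod r₂ → F) :=
  {c | ∀ j ∈ D, dft2 β₁ β₂ c j = 0}

lemma codeOf_abelian (D : Set (ZMod r₁ × ZMod r₂)) (h₁ : β₁ ^ r₁ = 1) (h₂ : β₂ ^ r₂ = 1) :
    IsAbelianCode2 (codeOf F D β₁ β₂) := by
  refine ⟨?_, ?_, ?_, ?_, ?_⟩
  · intro j _
    simp [dft2]
  · intro u hu v hv j hj
    have e₁ := hu j hj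
    have e₂ := hv j hj
    simp only [dft2] at e₁ e₂
    simp only [dft2, Pi.add_apply, map_add, add_mul, Finset.sum_add_distrib, e₁, e₂, add_zero]
  · intro a v hv j hj
    have e₁ := hv j hj
    simp only [dft2] at e₁
    simp only [dft2, Pi.smul_apply, smul_eq_mul, map_mul, mul_assoc, ← Finset.mul_sum]
    simp only [← mul_assoc]
    rw [e₁, mul_zero]
  · intro v hv j hj
    have e₁ : T β₁ β₂ (fun p => algebraMap F L (v p)) j = 0 := by
      rw [← dft2_eq_T h₁ h₂]
      exact hv j hj
    rw [dft2_eq_T h₁ h₂]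
    have : T β₁ β₂ (fun p => algebraMap F L (shiftX v p)) j =
        β₁ ^ j.1.val * T β₁ β₂ (fun p => algebraMap F L (v p)) j := by
      simp only [T, shiftX, Finset.mul_sum]
      rw [← Equiv.sum_comp ((Equiv.addRight (1 : ZMod r₁)).prodCongr (Equiv.refl (ZMod r₂)))]
      refine Finset.sum_congr rfl fun p _ => ?_
      simp only [Equiv.prodCongr_apply, Prod.map, Equiv.coe_addRight, Equiv.refl_apply,
        add_sub_cancel_right, mul_add, mul_one, ch_add h₁]
      ring
    rw [this, e₁, mul_zero]
  · intro v hv j hj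
    have e₁ : T β₁ β₂ (fun p => algebraMap F L (v p)) j = 0 := by
      rw [← dft2_eq_T h₁ h₂]
      exact hv j hj
    rw [dft2_eq_T h₁ h₂]
    have : T β₁ β₂ (fun p => algebraMap F L (shiftY v p)) j =
        β₂ ^ j.2.val * T β₁ β₂ (fun p => algebraMap F L (v p)) j := by
      simp only [T, shiftY, Finset.mul_sum]
      rw [← Equiv.sum_comp ((Equiv.refl (ZMod r₁)).prodCongr (Equiv.addRight (1 : ZMod r₂)))]
      refine Finset.sum_congr rfl fun p _ => ?_
      simp only [Equiv.prodCongr_apply, Prod.map, Equiv.coe_addRight, Equiv.refl_apply,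
        add_sub_cancel_right, mul_add, mul_one, ch_add h₂]
      ring
    rw [this, e₁, mul_zero]

/-- A `q`-closed set is the defining set of its code: the inverse transform of the indicator of
the complement is an `F`-codeword vanishing exactly on `D`. -/
lemma defSet2_codeOf [Fintype F] (hr₁ : Nat.Coprime r₁ (Fintype.card F))
    (hr₂ : Nat.Coprime r₂ (Fintype.card F)) (hβ₁ : IsPrimitiveRoot β₁ r₁)
    (hβ₂ : IsPrimitiveRoot β₂ r₂) {D : Set (ZMod r₁ × ZMod r₂)}
    (hD : ∀ p : ZMod r₁ × ZMod r₂,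
      ((Fintype.card F : ZMod r₁) * p.1, (Fintype.card F : ZMod r₂) * p.2) ∈ D ↔ p ∈ D) :
    defSet2 β₁ β₂ (codeOf F D β₁ β₂) = D := by
  have h₁ := hβ₁.pow_eq_one
  have h₂ := hβ₂.pow_eq_one
  apply Set.Subset.antisymm
  · intro j hj
    by_contra hjD
    have hrat := rational_of_equivariant (g := afforded2 (L := L) D) hr₁ hr₂ h₁ h₂ (by
      intro p
      by_cases hp : p ∈ D
      · simp [afforded2, hD, hp, Fintype.card_ne_zero]
      · simp [afforded2, hD, hp])
    choose c hc using hrat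
    have hT : dft2 β₁ β₂ c = afforded2 D := by
      rw [dft2_eq_T h₁ h₂, funext hc, T_invDFT2 hβ₁ hβ₂]
    have := hj c (fun i hi => by simp [hT, afforded2, hi])
    simp [hT, afforded2, hjD] at this
  · intro j hj c hc
    exact hc j hj

/-- Replacing a root of unity by a power `β ^ s` amounts to permuting the positions by
multiplication by `s`. -/
lemma codeOf_permEquiv (D : Set (ZMod r₁ × ZMod r₂)) {β₁' β₂' : L}
    (hβ₁ : IsPrimitiveRoot β₁ r₁) (hβ₂ : IsPrimitiveRoot β₂ r₂)
    (hβ₁' : IsPrimitiveRoot β₁' r₁) (hβ₂' : IsPrimitiveRoot β₂' r₂) :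
    PermEquiv (codeOf F D β₁ β₂) (codeOf F D β₁' β₂') := by
  have h₁ := hβ₁.pow_eq_one
  have h₂ := hβ₂.pow_eq_one
  obtain ⟨s₁, -, hs₁, e₁⟩ := hβ₁.isPrimitiveRoot_iff.1 hβ₁'
  obtain ⟨s₂, -, hs₂, e₂⟩ := hβ₂.isPrimitiveRoot_iff.1 hβ₂'
  let σ : Equiv.Perm (ZMod r₁ × ZMod r₂) :=
    (Units.mulLeft (ZMod.unitOfCoprime s₁ hs₁)).prodCongr
      (Units.mulLeft (ZMod.unitOfCoprime s₂ hs₂))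
  have key : ∀ c : ZMod r₁ × ZMod r₂ → F, dft2 β₁' β₂' (c ∘ σ) = dft2 β₁ β₂ c := by
    intro c
    rw [dft2_eq_T h₁ h₂, dft2_eq_T hβ₁'.pow_eq_one hβ₂'.pow_eq_one]
    funext j
    simp only [T]
    rw [← Equiv.sum_comp σ (fun p => algebraMap F L (c p) * β₁ ^ (j.1 * p.1).val *
      β₂ ^ (j.2 * p.2).val)]
    refine Finset.sum_congr rfl fun p _ => ?_
    simp only [σ, Function.comp, Equiv.prodCongr_apply, Prod.map, Units.mulLeft_apply,
      ZMod.coe_unitOfCoprime, mul_left_comm j.1, mul_left_comm j.2, ch_natCast_mul h₁,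
      ch_natCast_mul h₂, ← e₁, ← e₂, pow_right_comm _ s₁, pow_right_comm _ s₂]
  refine ⟨σ, ?_⟩
  ext c
  constructor
  · intro hc
    refine ⟨c ∘ σ.symm, fun j hj => ?_, ?_⟩
    · rw [← key]
      simpa [Function.comp_assoc] using hc j hj
    · simp [Function.comp_assoc]
  · rintro ⟨c, hc, rfl⟩ j hj
    rw [key]
    exact hc j hj

lemma wt_algebraMap {ι : Type} [Fintype ι] (c : ι → F) :
    wt (fun p => algebraMap F L (c p)) = wt c := by
  simp [wt]

lemma wt_prod (u : ZMod r₁ → L) (w : ZMod r₂ → L) :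
    wt (fun p : ZMod r₁ × ZMod r₂ => u p.1 * w p.2) = wt u * wt w := by
  simp only [wt]
  rw [← Finset.card_product]
  congr 1
  ext p
  simp

/-- A code all of whose nonzero words have apparent distance at least `m` at one point, and which
contains a nonzero word of weight at most `m`, has apparent distance and minimum distance `m`. -/
lemma delta_eq_minDist (hβ₁ : IsPrimitiveRoot β₁ r₁) (hβ₂ : IsPrimitiveRoot β₂ r₂)
    {C : Set (ZMod r₁ × ZMod r₂ → F)} {m : ℕ}
    (hlow : ∀ c ∈ C, c ≠ 0 → m ≤ bchDelta (dft2 β₁ β₂ c))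
    {c₀ : ZMod r₁ × ZMod r₂ → F} (hc₀ : c₀ ∈ C) (hne : c₀ ≠ 0) (hwt : wt c₀ ≤ m) :
    m = bchDeltaCode2 L C ∧ bchDeltaCode2 L C = minDist C := by
  have hle : ∀ (α₁ α₂ : L), IsPrimitiveRoot α₁ r₁ → IsPrimitiveRoot α₂ r₂ →
      ∀ c ∈ C, c ≠ 0 → bchDeltaCodeAt2 α₁ α₂ C ≤ wt c := by
    intro α₁ α₂ hα₁ hα₂ c hc hc0
    refine le_trans (Nat.sInf_le (m := bchDelta (dft2 α₁ α₂ c)) ⟨c, hc, hc0, rfl⟩) ?_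
    rw [dft2_eq_T hα₁.pow_eq_one hα₂.pow_eq_one, ← wt_algebraMap (L := L) c]
    exact bchDelta_le_wt hα₁ hα₂ _
  have h1 : m ≤ bchDeltaCodeAt2 β₁ β₂ C := by
    refine le_csInf (s := {m | ∃ c ∈ C, c ≠ 0 ∧ m = bchDelta (dft2 β₁ β₂ c)})
      ⟨_, c₀, hc₀, hne, rfl⟩ ?_
    rintro _ ⟨c, hc, hc0, rfl⟩
    exact hlow c hc hc0
  have h2 : bchDeltaCodeAt2 β₁ β₂ C ≤ bchDeltaCode2 L C := by
    refine le_csSup ⟨wt c₀, ?_⟩ ⟨β₁, β₂, hβ₁, hβ₂, rfl⟩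
    rintro _ ⟨α₁, α₂, hα₁, hα₂, rfl⟩
    exact hle α₁ α₂ hα₁ hα₂ c₀ hc₀ hne
  have h3 : bchDeltaCode2 L C ≤ minDist C := by
    refine csSup_le (s := {m | ∃ α₁ α₂ : L, IsPrimitiveRoot α₁ r₁ ∧ IsPrimitiveRoot α₂ r₂ ∧
      m = bchDeltaCodeAt2 α₁ α₂ C}) ⟨_, β₁, β₂, hβ₁, hβ₂, rfl⟩ ?_
    rintro _ ⟨α₁, α₂, hα₁, hα₂, rfl⟩
    refine le_csInf (s := wt '' (C \ {0})) ⟨_, c₀, ⟨hc₀, hne⟩, rfl⟩ ?_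
    rintro _ ⟨c, ⟨hc, hc0⟩, rfl⟩
    exact hle α₁ α₂ hα₁ hα₂ c hc hc0
  have h4 : minDist C ≤ wt c₀ := Nat.sInf_le ⟨c₀, ⟨hc₀, hne⟩, rfl⟩
  omega

end Code

/-! ### Designed distance of a single vector -/

section Parameters

variable {n : ℕ} {L : Type} [Field L] {v : ZMod n → L}

lemma bchV_le [NeZero n] (hv : v ≠ 0) : bchV v ≤ n := by
  rw [bchV, if_neg hv]
  exact bchRel_le (compl_supp_ne_univ hv) (bchRel_opt (compl_supp_ne_univ hv))

lemma one_le_bchV [NeZero n] (hv : v ≠ 0) : 1 ≤ bchV v := by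
  rw [bchV, if_neg hv]
  exact one_le_bchOpt (compl_supp_ne_univ hv)

lemma bchV_run [NeZero n] (hv : v ≠ 0) : ∃ i0 : ZMod n, ∀ t : ℕ, t < bchV v - 1 → v (i0 + t) = 0 := by
  rw [bchV, if_neg hv]
  obtain ⟨i0, hi⟩ := bchOpt_consec (compl_supp_ne_univ hv)
  exact ⟨i0, fun t ht => by simpa using hi t ht⟩

lemma bchV_lt_two [NeZero n] (hv : v ≠ 0) (hs : {i | v i ≠ 0} = Set.univ) : bchV v < 2 := by
  obtain ⟨i0, hi⟩ := bchV_run hv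
  by_contra h
  have h0 : i0 + ((0 : ℕ) : ZMod n) ∈ {i | v i ≠ 0} := hs ▸ Set.mem_univ _
  exact h0 (hi 0 (by omega))

/-- The zero set of a `q`-equivariant vector is stable under multiplication by powers of `q`. -/
lemma equivariant_pow_zero {q : ℕ} (hq : q ≠ 0) (hv : ∀ j, v ((q : ZMod n) * j) = v j ^ q)
    {j : ZMod n} (hj : v j = 0) (t : ℕ) : v ((q : ZMod n) ^ t * j) = 0 := by
  induction t with
  | zero => simpa using hj
  | succ t ih => rw [pow_succ', mul_assoc, hv, ih, zero_pow hq]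

end Parameters

end BivarBCH

open BivarBCH

/-- Construction of a family of pairwise permutation-equivalent
bivariate BCH codes `{C_β̄ = B_q(β̄,γ̄,δ̄,b̄) : β̄ ∈ U}` whose designed distance,
apparent distance and minimum distance coincide. -/
theorem stmt_19 {F : Type} [Field F] [Fintype F] {L : Type} [Field L] [Algebra F L]
    (r₁ r₂ : ℕ) [NeZero r₁] [NeZero r₂]
    (hr₁ : Nat.Coprime r₁ (Fintype.card F)) (hr₂ : Nat.Coprime r₂ (Fintype.card F))
    (K : IntermediateField F L)
    (a : ZMod r₁ → L) (b : ZMod r₂ → L)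
    (haK : ∀ i, a i ∈ K) (hbK : ∀ j, b j ∈ K)
    (hadvd : toPoly a ∣ (Polynomial.X ^ r₁ - 1 : Polynomial L))
    (hbdvd : toPoly b ∣ (Polynomial.X ^ r₂ - 1 : Polynomial L))
    (α₁ α₂ : L) (hα₁ : IsPrimitiveRoot α₁ r₁) (hα₂ : IsPrimitiveRoot α₂ r₂)
    (h₁ : ZMod r₁) (h₂ : ZMod r₂)
    (hFa : ∀ i, invDFT1 α₁ (shiftBy h₁.val a) i ∈ Set.range (algebraMap F L))
    (hFb : ∀ j, invDFT1 α₂ (shiftBy h₂.val b) j ∈ Set.range (algebraMap F L))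
    (hne : invDFT1 α₁ (shiftBy h₁.val a) ≠ (fun i => if i = 0 then 1 else 0) ∨
           invDFT1 α₂ (shiftBy h₂.val b) ≠ (fun j => if j = 0 then 1 else 0)) :
    ∃ (γ : Set (Fin 2)) (δ₁ δ₂ : ℕ) (b₁ : ZMod r₁) (b₂ : ZMod r₂)
      (Cfam : L → L → Set (ZMod r₁ × ZMod r₂ → F)),
      -- each member of the family is the bivariate BCH code B_q(β̄,γ̄,δ̄,b̄)
      (∀ β₁ β₂ : L, IsPrimitiveRoot β₁ r₁ → IsPrimitiveRoot β₂ r₂ →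
        IsAbelianCode2 (Cfam β₁ β₂) ∧
        (0 ∈ γ → 2 ≤ δ₁ ∧ δ₁ ≤ r₁) ∧ (1 ∈ γ → 2 ≤ δ₂ ∧ δ₂ ≤ r₂) ∧
        defSet2 β₁ β₂ (Cfam β₁ β₂) =
          bivarBCHDefSet (Fintype.card F) γ δ₁ δ₂ b₁ b₂) ∧
      -- the family is pairwise permutation equivalent
      (∀ β₁ β₂ β₁' β₂' : L, IsPrimitiveRoot β₁ r₁ → IsPrimitiveRoot β₂ r₂ →
        IsPrimitiveRoot β₁' r₁ → IsPrimitiveRoot β₂' r₂ →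
          PermEquiv (Cfam β₁ β₂) (Cfam β₁' β₂')) ∧
      -- (1)
      (({i : ZMod r₁ | a i ≠ 0} = Set.univ → 0 ∉ γ) ∧
       ({j : ZMod r₂ | b j ≠ 0} = Set.univ → 1 ∉ γ)) ∧
      -- (2)
      (δ₁ = bchV a ∧ δ₂ = bchV b) ∧
      -- (3)
      (∀ β₁ β₂ : L, IsPrimitiveRoot β₁ r₁ → IsPrimitiveRoot β₂ r₂ →
        (if 0 ∈ γ then δ₁ else 1) * (if 1 ∈ γ then δ₂ else 1)
            = bchDeltaCode2 L (Cfam β₁ β₂) ∧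
        bchDeltaCode2 L (Cfam β₁ β₂) = minDist (Cfam β₁ β₂)) ∧
      -- (4)
      (∀ β₁ β₂ : L, IsPrimitiveRoot β₁ r₁ → IsPrimitiveRoot β₂ r₂ →
        (∀ p : ZMod r₁ × ZMod r₂,
          invDFT1 β₁ (shiftBy h₁.val a) p.1 * invDFT1 β₂ (shiftBy h₂.val b) p.2
            = invDFT2 β₁ β₂ (prodPoly (shiftBy h₁.val a) (shiftBy h₂.val b)) p) ∧
        ∃ cβ : ZMod r₁ × ZMod r₂ → F,
          (∀ p, algebraMap F L (cβ p) =
            invDFT2 β₁ β₂ (prodPoly (shiftBy h₁.val a) (shiftBy h₂.val b)) p) ∧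
          cβ ∈ Cfam β₁ β₂) := by
  have ha0 := ne_zero_of_dvd hadvd
  have hb0 := ne_zero_of_dvd hbdvd
  set q := Fintype.card F with hq
  have hq0 : q ≠ 0 := Fintype.card_ne_zero
  set A := shiftBy h₁.val a with hA
  set B := shiftBy h₂.val b with hB
  have hAeq := equivariant_of_rational hα₁ hFa
  have hBeq := equivariant_of_rational hα₂ hFb
  obtain ⟨i₁, hi₁⟩ := bchV_run ha0
  obtain ⟨i₂, hi₂⟩ := bchV_run hb0
  have hrunA : ∀ t : ℕ, t < bchV a - 1 → A (i₁ + h₁ + t) = 0 := fun t ht => by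
    rw [← hi₁ t ht]
    simp only [hA, shiftBy, ZMod.natCast_val, ZMod.cast_id', id_eq]
    congr 1
    ring
  have hrunB : ∀ t : ℕ, t < bchV b - 1 → B (i₂ + h₂ + t) = 0 := fun t ht => by
    rw [← hi₂ t ht]
    simp only [hB, shiftBy, ZMod.natCast_val, ZMod.cast_id', id_eq]
    congr 1
    ring
  have hA0 : A ≠ 0 := by
    obtain ⟨p, hp⟩ := Function.ne_iff.mp ha0
    exact Function.ne_iff.mpr ⟨p + h₁, by simpa [hA, shiftBy] using hp⟩
  have hB0 : B ≠ 0 := by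
    obtain ⟨p, hp⟩ := Function.ne_iff.mp hb0
    exact Function.ne_iff.mpr ⟨p + h₂, by simpa [hB, shiftBy] using hp⟩
  obtain ⟨γ, hγ0, hγ1⟩ : ∃ γ : Set (Fin 2), (0 ∈ γ ↔ 2 ≤ bchV a) ∧ (1 ∈ γ ↔ 2 ≤ bchV b) :=
    ⟨{k | (k = 0 ∧ 2 ≤ bchV a) ∨ (k = 1 ∧ 2 ≤ bchV b)}, by simp, by simp⟩
  let D : Set (ZMod r₁ × ZMod r₂) :=
    bivarBCHDefSet q γ (bchV a) (bchV b) (i₁ + h₁) (i₂ + h₂)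
  -- a product of two minimum weight words attains the designed distance
  have hword : ∀ β₁ β₂ : L, IsPrimitiveRoot β₁ r₁ → IsPrimitiveRoot β₂ r₂ →
      ∃ c : ZMod r₁ × ZMod r₂ → F,
        (∀ p, algebraMap F L (c p) = invDFT2 β₁ β₂ (prodPoly A B) p) ∧
        c ∈ codeOf F D β₁ β₂ ∧ c ≠ 0 ∧ wt c ≤ bchV a * bchV b := by
    intro β₁ β₂ hβ₁ hβ₂
    have hrat := rational_of_equivariant (F := F) (g := prodPoly A B) hr₁ hr₂
      hβ₁.pow_eq_one hβ₂.pow_eq_one (fun j => by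
        simp only [prodPoly, mul_pow]
        rw [hAeq, hBeq])
    choose c hc using hrat
    have hT : dft2 β₁ β₂ c = prodPoly A B := by
      rw [dft2_eq_T hβ₁.pow_eq_one hβ₂.pow_eq_one, funext hc, T_invDFT2 hβ₁ hβ₂]
    refine ⟨c, hc, ?_, ?_, ?_⟩
    · intro j hj
      rw [hT]
      rcases hj with ⟨-, l, hl, x, hx, t, rfl⟩ | ⟨-, l, hl, x, hx, t, rfl⟩
      · simp only [prodPoly]
        rw [hx, equivariant_pow_zero hq0 hAeq (hrunA l (Finset.mem_range.1 hl)), zero_mul]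
      · simp only [prodPoly]
        rw [hx, equivariant_pow_zero hq0 hBeq (hrunB l (Finset.mem_range.1 hl)), mul_zero]
    · rintro rfl
      obtain ⟨x, hx⟩ := Function.ne_iff.mp hA0
      obtain ⟨y, hy⟩ := Function.ne_iff.mp hB0
      have : prodPoly A B (x, y) = 0 := by
        rw [← hT]
        simp [dft2]
      exact mul_ne_zero hx hy this
    · rw [← wt_algebraMap (L := L) c, funext hc, ← funext (invDFT_prod A B), wt_prod]
      exact Nat.mul_le_mul (wt_inv_le hβ₁ hadvd h₁) (wt_inv_le hβ₂ hbdvd h₂)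
  -- `δₖ = 1` for `k ∉ γ`; any decidability instances may occur in the conditionals
  have hprod : ∀ [Decidable (0 ∈ γ)] [Decidable (1 ∈ γ)],
      (if 0 ∈ γ then bchV a else 1) * (if 1 ∈ γ then bchV b else 1) = bchV a * bchV b := by
    intro _ _
    have := one_le_bchV ha0
    have := one_le_bchV hb0
    congr 1
    · split_ifs with h
      · rfl
      · rw [hγ0] at h
        omega
    · split_ifs with h
      · rfl
      · rw [hγ1] at h
        omega
  refine ⟨γ, bchV a, bchV b, i₁ + h₁, i₂ + h₂, codeOf F D, ?_, ?_, ⟨?_, ?_⟩, ⟨rfl, rfl⟩, ?_, ?_⟩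
  · intro β₁ β₂ hβ₁ hβ₂
    exact ⟨codeOf_abelian D hβ₁.pow_eq_one hβ₂.pow_eq_one,
      fun h => ⟨hγ0.1 h, bchV_le ha0⟩, fun h => ⟨hγ1.1 h, bchV_le hb0⟩,
      defSet2_codeOf hr₁ hr₂ hβ₁ hβ₂ (defSet_mul_mem_iff hr₁ hr₂)⟩
  · intro β₁ β₂ β₁' β₂' hβ₁ hβ₂ hβ₁' hβ₂'
    exact codeOf_permEquiv D hβ₁ hβ₂ hβ₁' hβ₂'
  · intro hs h
    exact absurd (bchV_lt_two ha0 hs) (not_lt.2 (hγ0.1 h))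
  · intro hs h
    exact absurd (bchV_lt_two hb0 hs) (not_lt.2 (hγ1.1 h))
  · intro β₁ β₂ hβ₁ hβ₂
    obtain ⟨c₀, -, hc₀, hne₀, hwt⟩ := hword β₁ β₂ hβ₁ hβ₂
    rw [@hprod _ _]
    refine delta_eq_minDist hβ₁ hβ₂ (fun c hc hc0 => ?_) hc₀ hne₀ hwt
    refine mul_le_bchDelta (b₁ := i₁ + h₁) (b₂ := i₂ + h₂) ?_ ?_ ?_
    · intro h
      rw [dft2_eq_T hβ₁.pow_eq_one hβ₂.pow_eq_one] at h
      have := T_inj hβ₁ hβ₂ _ h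
      exact hc0 (funext fun p => by simpa using congrFun this p)
    · intro t ht y
      refine hc _ (Or.inl ⟨hγ0.2 (by omega), t, Finset.mem_range.2 ht, (_, y), rfl, 0, ?_⟩)
      simp
    · intro t ht x
      refine hc _ (Or.inr ⟨hγ1.2 (by omega), t, Finset.mem_range.2 ht, (x, _), rfl, 0, ?_⟩)
      simp
  · intro β₁ β₂ hβ₁ hβ₂
    obtain ⟨c, hc, hmem, -, -⟩ := hword β₁ β₂ hβ₁ hβ₂
    exact ⟨invDFT_prod A B, c, hc, hmem⟩
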